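/- Let F be a smooth function on a neighborhood of the origin in ℝ² with nonvanishing Taylor series, let M > 0, α = α_M(F), and C₀ > 0. Then there exist C, δ > 0 such that |∂_y² F(x,y)| ≤ C x^{α − 2M} for all (x,y) with 0 < x < δ and |y| ≤ C₀ x^M. -/

import Mathlib

open MeasureTheory Set Filter Topology

noncomputable section

/-- Iterated partial derivative `∂ₓᵃ ∂ᵧᵇ R` at `(x, y)`. -/
def pderiv2 (R : ℝ → ℝ → ℝ) (a b : ℕ) (x y : ℝ) : ℝ :=
  iteratedDeriv a (fun x' => iteratedDeriv b (fun y' => R x' y') y) x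

/-- Taylor coefficient `R_{ab} = ∂ₓᵃ ∂ᵧᵇ R(0,0) / (a! b!)`. -/
def tcoeff (R : ℝ → ℝ → ℝ) (a b : ℕ) : ℝ :=
  pderiv2 R a b 0 0 / (Nat.factorial a * Nat.factorial b)

/-- The support of the Taylor series of `R` at the origin. -/
def tsupp (R : ℝ → ℝ → ℝ) : Set (ℕ × ℕ) := {p | tcoeff R p.1 p.2 ≠ 0}

/-- The Newton polygon of `R`. -/
def newtonPolygon (R : ℝ → ℝ → ℝ) : Set (ℝ × ℝ) :=
  convexHull ℝ (⋃ p ∈ tsupp R, {q : ℝ × ℝ | (p.1 : ℝ) ≤ q.1 ∧ (p.2 : ℝ) ≤ q.2})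

/-- The Newton distance of `R`. -/
def newtonDist (R : ℝ → ℝ → ℝ) : ℝ := sInf {t : ℝ | (t, t) ∈ newtonPolygon R}

/-- `e` is a compact edge of `N(R)` of slope `-1/M` (with `M > 0`): it is the
(one-dimensional, compact) face of the Newton polygon cut out by a supporting line
`t₁ + M t₂ = c`. -/
def IsCompactEdge (R : ℝ → ℝ → ℝ) (M : ℝ) (e : Set (ℝ × ℝ)) : Prop :=
  0 < M ∧ ∃ c : ℝ, (∀ q ∈ newtonPolygon R, c ≤ q.1 + M * q.2) ∧
    e = {q ∈ newtonPolygon R | q.1 + M * q.2 = c} ∧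
    ∃ v w : ℝ × ℝ, v ≠ w ∧ e = segment ℝ v w

/-- The edge polynomial `R_e(x,y) = Σ_{(a,b) ∈ e ∩ supp R} R_{ab} x^a y^b`. -/
def edgePoly (R : ℝ → ℝ → ℝ) (e : Set (ℝ × ℝ)) (x y : ℝ) : ℝ :=
  ∑' p : ℕ × ℕ,
    Set.indicator {p : ℕ × ℕ | ((p.1 : ℝ), (p.2 : ℝ)) ∈ e}
      (fun p => tcoeff R p.1 p.2 * x ^ p.1 * y ^ p.2) p

/-- `p` has a zero of order exactly `m` at `y₀`. -/
def ZeroOfOrder (p : ℝ → ℝ) (m : ℕ) (y₀ : ℝ) : Prop :=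
  (∀ j < m, iteratedDeriv j p y₀ = 0) ∧ iteratedDeriv m p y₀ ≠ 0

/-- `R` is in nonadapted coordinates: the bisectrix meets the interior of a compact
edge `e` such that `R_e(1, ⬝)` has a real zero of order greater than `d(R)`. -/
def IsNonadapted (R : ℝ → ℝ → ℝ) : Prop :=
  ∃ (M : ℝ) (e : Set (ℝ × ℝ)) (v w : ℝ × ℝ), IsCompactEdge R M e ∧ v ≠ w ∧
    e = segment ℝ v w ∧ (∃ t : ℝ, (t, t) ∈ openSegment ℝ v w) ∧
    ∃ (y₀ : ℝ) (m : ℕ), newtonDist R < (m : ℝ) ∧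
      ZeroOfOrder (fun y => edgePoly R e 1 y) m y₀

/-- `R` is in generic adapted coordinates: adapted coordinates, every compact edge has slope
at least `-1`, and the Newton polygon meets the `t₂`-axis. -/
def GenericAdapted (R : ℝ → ℝ → ℝ) : Prop :=
  ¬ IsNonadapted R ∧ (∀ M e, IsCompactEdge R M e → 1 ≤ M) ∧
    ∃ t : ℝ, ((0 : ℝ), t) ∈ newtonPolygon R

/-- `α_M(R) = min {a + M b : (a,b) ∈ supp R}`. -/
def alphaM (R : ℝ → ℝ → ℝ) (M : ℝ) : ℝ :=
  sInf {t : ℝ | ∃ p ∈ tsupp R, t = (p.1 : ℝ) + M * p.2}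

/-- `R_M`, the sum of the terms of the Taylor series of `R` of minimal `M`-weighted degree. -/
def RMpart (R : ℝ → ℝ → ℝ) (M : ℝ) (x y : ℝ) : ℝ :=
  ∑' p : ℕ × ℕ,
    Set.indicator {p : ℕ × ℕ | p ∈ tsupp R ∧ (p.1 : ℝ) + M * p.2 = alphaM R M}
      (fun p => tcoeff R p.1 p.2 * x ^ p.1 * y ^ p.2) p

/-- The Hessian determinant of `f`. -/
def hessDet (f : ℝ → ℝ → ℝ) (x y : ℝ) : ℝ :=
  pderiv2 f 2 0 x y * pderiv2 f 0 2 x y - (pderiv2 f 1 1 x y) ^ 2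

/-- `F*(x,y) = (Σ_{(a,b) vertex of N(F)} x^{2a} y^{2b})^{1/2}`. -/
def vertexFn (F : ℝ → ℝ → ℝ) (x y : ℝ) : ℝ :=
  Real.sqrt (∑' p : ℕ × ℕ,
    Set.indicator
      {p : ℕ × ℕ | ((p.1 : ℝ), (p.2 : ℝ)) ∈ (newtonPolygon F).extremePoints ℝ}
      (fun p => x ^ (2 * p.1) * y ^ (2 * p.2)) p)

/-!
Restricted to the cusp `|y| ≤ C x ^ M`, a monomial `x ^ a * y ^ b` has size `O(x ^ (a + M * b))`,
so a smooth `H` whose Taylor support lies in `a + M * b ≥ β` should be `O(x ^ β)` there. If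
`β ≤ 0`, boundedness of `H` is enough. Otherwise write
`H(x, y) = H(x, 0) + (H(x, y) - H(x, 0))`: the first term is `O(x ^ β)` by Taylor's theorem in one
variable, and `∂_y H` has its support in `a + M * b ≥ β - M`, so by induction it is
`O(x ^ (β - M))` and the mean value inequality over an interval of length `|y| ≤ C x ^ M` bounds
the second term by `O(x ^ β)`. Each further `∂_y` likewise costs one factor `x ^ M`.
-/

section

open Asymptotics
open scoped ContDiff

variable {E : Type*} [NormedAddCommGroup E] [NormedSpace ℝ E]

theorem isBigO_rpow_rpow_nhdsGT_zero {a b : ℝ} (hab : a ≤ b) :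
    (fun x : ℝ => x ^ b) =O[𝓝[>] 0] fun x => x ^ a := by
  refine IsBigO.of_bound' ?_
  filter_upwards [Ioo_mem_nhdsGT one_pos] with x ⟨hx0, hx1⟩
  rw [Real.norm_of_nonneg (Real.rpow_nonneg hx0.le b),
    Real.norm_of_nonneg (Real.rpow_nonneg hx0.le a)]
  exact Real.rpow_le_rpow_of_exponent_ge hx0 hx1.le hab

theorem isBigO_sub_pow_of_iteratedDeriv_eq_zero {f : ℝ → E} {x₀ : ℝ} {n : ℕ}
    (hf : ContDiffAt ℝ n f x₀) (hzero : ∀ k < n, iteratedDeriv k f x₀ = 0) :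
    f =O[𝓝 x₀] fun x => (x - x₀) ^ n := by
  obtain ⟨ε, hε, hball⟩ := Metric.eventually_nhds_iff_ball.1 (hf.eventually (by simp))
  have hx₀ : x₀ ∈ Metric.ball x₀ ε := Metric.mem_ball_self hε
  have hremainder := (taylor_isLittleO (convex_ball x₀ ε) hx₀
    fun x hx => (hball x hx).contDiffWithinAt).isBigO
  rw [Metric.isOpen_ball.nhdsWithin_eq hx₀] at hremainder
  have hpoly : taylorWithinEval f n (Metric.ball x₀ ε) x₀ =O[𝓝 x₀] fun x => (x - x₀) ^ n := by
    refine IsBigO.of_bound ‖(n.factorial : ℝ)⁻¹ • iteratedDeriv n f x₀‖ (.of_forall fun x => ?_)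
    have hlow : ∀ k ∈ Finset.range n, ((k.factorial : ℝ)⁻¹ * (x - x₀) ^ k) •
        iteratedDerivWithin k f (Metric.ball x₀ ε) x₀ = 0 := fun k hk => by
      rw [iteratedDerivWithin_of_isOpen Metric.isOpen_ball hx₀, hzero k (Finset.mem_range.1 hk),
        smul_zero]
    rw [taylor_within_apply, Finset.sum_range_succ, Finset.sum_eq_zero hlow, zero_add,
      iteratedDerivWithin_of_isOpen Metric.isOpen_ball hx₀, mul_comm, mul_smul, norm_smul, mul_comm]
  simpa using hremainder.add hpoly

theorem isBigO_rpow_of_iteratedDeriv_eq_zero {f : ℝ → E} {β : ℝ} (hf : ContDiffAt ℝ ⌈β⌉₊ f 0)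
    (hzero : ∀ k : ℕ, (k : ℝ) < β → iteratedDeriv k f 0 = 0) :
    f =O[𝓝[>] 0] fun x => x ^ β := by
  have hpow : f =O[𝓝 0] fun x => x ^ ⌈β⌉₊ := by
    simpa only [sub_zero] using
      isBigO_sub_pow_of_iteratedDeriv_eq_zero hf fun k hk => hzero k (Nat.lt_ceil.1 hk)
  have hrpow := isBigO_rpow_rpow_nhdsGT_zero (Nat.le_ceil β)
  simp only [Real.rpow_natCast] at hrpow
  exact (hpow.mono nhdsWithin_le_nhds).trans hrpow

theorem contDiffAt_deriv_snd {H : ℝ → ℝ → E} {p : ℝ × ℝ} {m n : WithTop ℕ∞}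
    (hH : ContDiffAt ℝ n (fun q : ℝ × ℝ => H q.1 q.2) p) (hmn : m + 1 ≤ n) :
    ContDiffAt ℝ m (fun q : ℝ × ℝ => deriv (H q.1) q.2) p := by
  have hcomp : ContDiffAt ℝ n (Function.uncurry fun (q : ℝ × ℝ) y => H q.1 y) (p, p.2) :=
    hH.comp (p, p.2) (f := fun r : (ℝ × ℝ) × ℝ => (r.1.1, r.2)) (by fun_prop)
  simpa only [fderiv_apply_one_eq_deriv] using
    (hcomp.fderiv contDiffAt_snd hmn).clm_apply (contDiffAt_const (c := (1 : ℝ)))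

/-- The cusp `0 < x`, `|y| ≤ C x ^ M`. Bounds on it near the origin are expressed along the
filter `𝓝[cusp M C] 0`. -/
def cusp (M C : ℝ) : Set (ℝ × ℝ) := {p | 0 < p.1 ∧ |p.2| ≤ C * p.1 ^ M}

variable {M C : ℝ}

theorem tendsto_fst_nhdsWithin_cusp : Tendsto Prod.fst (𝓝[cusp M C] 0) (𝓝[>] 0) :=
  tendsto_nhdsWithin_iff.2 ⟨continuousAt_fst.mono_left nhdsWithin_le_nhds,
    eventually_mem_nhdsWithin.mono fun _ hp => hp.1⟩

theorem isBigO_snd_nhdsWithin_cusp :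
    Prod.snd =O[𝓝[cusp M C] 0] fun p : ℝ × ℝ => p.1 ^ M := by
  refine IsBigO.of_bound C ?_
  filter_upwards [self_mem_nhdsWithin] with p ⟨hpos, hle⟩
  rwa [Real.norm_of_nonneg (Real.rpow_nonneg hpos.le M)]

theorem eventually_forall_abs_le_snd_nhdsWithin_cusp {P : ℝ × ℝ → Prop}
    (hP : ∀ᶠ p in 𝓝[cusp M C] 0, P p) :
    ∀ᶠ p in 𝓝[cusp M C] 0, ∀ t, |t| ≤ |p.2| → P (p.1, t) := by
  obtain ⟨ε, hε, hsub⟩ := Metric.mem_nhdsWithin_iff.1 hP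
  refine Metric.mem_nhdsWithin_iff.2 ⟨ε, hε, fun p ⟨hball, hpos, hle⟩ t ht => ?_⟩
  rw [mem_ball_zero_iff, Prod.norm_def, max_lt_iff] at hball
  refine hsub ⟨?_, hpos, ht.trans hle⟩
  rw [mem_ball_zero_iff, Prod.norm_def, max_lt_iff]
  exact ⟨hball.1, ht.trans_lt hball.2⟩

theorem exists_forall_of_eventually_nhdsWithin_cusp (hM : 0 < M) {P : ℝ × ℝ → Prop}
    (hP : ∀ᶠ p in 𝓝[cusp M C] 0, P p) :
    ∃ δ > 0, ∀ x y, 0 < x → x < δ → |y| ≤ C * x ^ M → P (x, y) := by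
  obtain ⟨ε, hε, hsub⟩ := Metric.mem_nhdsWithin_iff.1 hP
  have hwidth : Tendsto (fun x : ℝ => C * x ^ M) (𝓝[>] 0) (𝓝 0) := by
    have hcont : ContinuousAt (fun x : ℝ => C * x ^ M) 0 :=
      continuousAt_const.mul (Real.continuousAt_rpow_const 0 M (Or.inr hM.le))
    simpa [Real.zero_rpow hM.ne'] using hcont.mono_left nhdsWithin_le_nhds
  obtain ⟨δ, hδ, hIoo⟩ := mem_nhdsGT_iff_exists_Ioo_subset.1
    ((hwidth.eventually_lt_const hε).and (Ioo_mem_nhdsGT hε))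
  refine ⟨δ, hδ, fun x y hx0 hxδ hy => hsub ⟨?_, hx0, hy⟩⟩
  obtain ⟨hwidth_lt, -, hx_lt⟩ := hIoo ⟨hx0, hxδ⟩
  rw [mem_ball_zero_iff, Prod.norm_def, max_lt_iff]
  exact ⟨by rwa [Real.norm_of_nonneg hx0.le], hy.trans_lt hwidth_lt⟩

theorem isBigO_sub_nhdsWithin_cusp_of_deriv {H : ℝ → ℝ → E} {g : ℝ → ℝ}
    (hdiff : ∀ᶠ p in 𝓝[cusp M C] 0, DifferentiableAt ℝ (H p.1) p.2)
    (hderiv : (fun p : ℝ × ℝ => deriv (H p.1) p.2) =O[𝓝[cusp M C] 0] fun p => g p.1) :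
    (fun p : ℝ × ℝ => H p.1 p.2 - H p.1 0) =O[𝓝[cusp M C] 0] fun p => g p.1 * p.2 := by
  obtain ⟨K, hK⟩ := hderiv.bound
  refine IsBigO.of_bound K ?_
  filter_upwards [eventually_forall_abs_le_snd_nhdsWithin_cusp (hdiff.and hK)] with p hp
  have hslice : ∀ t ∈ Icc (-|p.2|) |p.2|,
      DifferentiableAt ℝ (H p.1) t ∧ ‖deriv (H p.1) t‖ ≤ K * ‖g p.1‖ :=
    fun t ht => hp t (abs_le.2 ht)
  have hmean := (convex_Icc (-|p.2|) |p.2|).norm_image_sub_le_of_norm_deriv_le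
    (fun t ht => (hslice t ht).1) (fun t ht => (hslice t ht).2)
    (show (0 : ℝ) ∈ _ by simp) (abs_le.1 le_rfl)
  rwa [sub_zero, mul_assoc, ← norm_mul] at hmean

theorem isBigO_rpow_nhdsWithin_cusp_of_deriv {H : ℝ → ℝ → E} {β : ℝ}
    (hdiff : ∀ᶠ p in 𝓝[cusp M C] 0, DifferentiableAt ℝ (H p.1) p.2)
    (haxis : (fun x => H x 0) =O[𝓝[>] 0] fun x => x ^ β)
    (hderiv : (fun p : ℝ × ℝ => deriv (H p.1) p.2) =O[𝓝[cusp M C] 0] fun p => p.1 ^ (β - M)) :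
    (fun p : ℝ × ℝ => H p.1 p.2) =O[𝓝[cusp M C] 0] fun p => p.1 ^ β := by
  have hprod : (fun p : ℝ × ℝ => p.1 ^ (β - M) * p.1 ^ M) =ᶠ[𝓝[cusp M C] 0]
      fun p => p.1 ^ β := by
    filter_upwards [self_mem_nhdsWithin] with p hp
    rw [← Real.rpow_add hp.1, sub_add_cancel]
  have hincrement :
      (fun p : ℝ × ℝ => H p.1 p.2 - H p.1 0) =O[𝓝[cusp M C] 0] fun p => p.1 ^ β :=
    (isBigO_sub_nhdsWithin_cusp_of_deriv (g := fun x => x ^ (β - M)) hdiff hderiv).trans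
      (((isBigO_refl _ _).mul isBigO_snd_nhdsWithin_cusp).trans_eventuallyEq hprod)
  simpa [Function.comp_def] using
    hincrement.add (haxis.comp_tendsto tendsto_fst_nhdsWithin_cusp)

variable {F : ℝ → ℝ → ℝ} {a b : ℕ} {β : ℝ}

theorem mem_tsupp_iff_pderiv2_ne_zero : (a, b) ∈ tsupp F ↔ pderiv2 F a b 0 0 ≠ 0 := by
  simp [tsupp, tcoeff, Nat.factorial_ne_zero]

theorem pderiv2_succ_right (x y : ℝ) :
    pderiv2 F a (b + 1) x y = pderiv2 (fun x => deriv (F x)) a b x y := by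
  simp only [pderiv2, iteratedDeriv_succ']

theorem mem_tsupp_deriv_snd_iff :
    (a, b) ∈ tsupp (fun x => deriv (F x)) ↔ (a, b + 1) ∈ tsupp F := by
  rw [mem_tsupp_iff_pderiv2_ne_zero, mem_tsupp_iff_pderiv2_ne_zero, pderiv2_succ_right]

theorem le_weight_of_mem_tsupp_deriv_snd (hβ : ∀ p ∈ tsupp F, β ≤ p.1 + M * p.2) :
    ∀ p ∈ tsupp (fun x => deriv (F x)), β - M ≤ p.1 + M * p.2 := by
  rintro ⟨a, b⟩ hab
  have hle := hβ _ (mem_tsupp_deriv_snd_iff.1 hab)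
  push_cast at hle
  linarith

theorem alphaM_le_of_mem_tsupp (hM : 0 ≤ M) {p : ℕ × ℕ} (hp : p ∈ tsupp F) :
    alphaM F M ≤ p.1 + M * p.2 :=
  csInf_le ⟨0, by rintro _ ⟨q, -, rfl⟩; positivity⟩ ⟨p, hp, rfl⟩

theorem isBigO_axis_rpow_of_tsupp (hF : ContDiffAt ℝ ∞ (fun p : ℝ × ℝ => F p.1 p.2) 0)
    (hβ : ∀ p ∈ tsupp F, β ≤ p.1 + M * p.2) :
    (fun x => F x 0) =O[𝓝[>] 0] fun x => x ^ β := by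
  have haxis : ContDiffAt ℝ ∞ (fun x => F x 0) 0 :=
    hF.comp (0 : ℝ) (f := fun x : ℝ => (x, (0 : ℝ))) (by fun_prop)
  refine isBigO_rpow_of_iteratedDeriv_eq_zero (haxis.of_le (mod_cast le_top)) fun a ha => ?_
  by_contra hne
  have hmem : (a, 0) ∈ tsupp F := mem_tsupp_iff_pderiv2_ne_zero.2 (by simpa [pderiv2] using hne)
  simpa using ha.trans_le (hβ _ hmem)

theorem isBigO_rpow_nhdsWithin_cusp_of_tsupp (hM : 0 < M)
    (hF : ContDiffAt ℝ ∞ (fun p : ℝ × ℝ => F p.1 p.2) 0)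
    (hβ : ∀ p ∈ tsupp F, β ≤ p.1 + M * p.2) :
    (fun p : ℝ × ℝ => F p.1 p.2) =O[𝓝[cusp M C] 0] fun p => p.1 ^ β := by
  obtain ⟨n, hn⟩ := Archimedean.arch β hM
  induction n generalizing F β with
  | zero =>
    have hbounded : (fun p : ℝ × ℝ => F p.1 p.2) =O[𝓝[cusp M C] 0] fun _ => (1 : ℝ) :=
      (hF.continuousAt.mono_left nhdsWithin_le_nhds).isBigO_one ℝ
    refine hbounded.trans ?_
    simpa [Function.comp_def] using
      (isBigO_rpow_rpow_nhdsGT_zero (b := 0) (by simpa using hn)).comp_tendsto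
        tendsto_fst_nhdsWithin_cusp
  | succ n ih =>
    have hdiff : ∀ᶠ p in 𝓝 (0 : ℝ × ℝ), DifferentiableAt ℝ (F p.1) p.2 := by
      filter_upwards [(hF.of_le (m := 1) (mod_cast le_top)).eventually (by simp)] with p hp
      exact (hp.differentiableAt one_ne_zero).comp p.2 (f := fun y => (p.1, y)) (by fun_prop)
    exact isBigO_rpow_nhdsWithin_cusp_of_deriv (hdiff.filter_mono nhdsWithin_le_nhds)
      (isBigO_axis_rpow_of_tsupp hF hβ)
      (ih (contDiffAt_deriv_snd hF le_rfl) (le_weight_of_mem_tsupp_deriv_snd hβ)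
        (by rw [succ_nsmul] at hn; linarith))

theorem pderiv2_zero_left_isBigO_rpow_of_tsupp (hM : 0 < M)
    (hF : ContDiffAt ℝ ∞ (fun p : ℝ × ℝ => F p.1 p.2) 0)
    (hβ : ∀ p ∈ tsupp F, β ≤ p.1 + M * p.2) (b : ℕ) :
    (fun p : ℝ × ℝ => pderiv2 F 0 b p.1 p.2) =O[𝓝[cusp M C] 0] fun p => p.1 ^ (β - b * M) := by
  induction b generalizing F β with
  | zero => simpa [pderiv2] using isBigO_rpow_nhdsWithin_cusp_of_tsupp hM hF hβ
  | succ b ih =>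
    simp only [pderiv2_succ_right]
    convert ih (contDiffAt_deriv_snd hF le_rfl) (le_weight_of_mem_tsupp_deriv_snd hβ) using 3
    push_cast
    ring

end

/-- On the region `0 < x < δ`, `|y| ≤ C₀ x^M`, one has `|∂_y² F(x,y)| ≤ C x^{α-2M}`. -/
theorem stmt_15 (F : ℝ → ℝ → ℝ) (U₀ : Set (ℝ × ℝ)) (hU₀ : U₀ ∈ 𝓝 ((0 : ℝ), (0 : ℝ)))
    (hsm : ContDiffOn ℝ (⊤ : ℕ∞) (fun p : ℝ × ℝ => F p.1 p.2) U₀)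
    (hts : (tsupp F).Nonempty)
    (M : ℝ) (hM : 0 < M) (C₀ : ℝ) (hC₀ : 0 < C₀) :
    ∃ C > (0 : ℝ), ∃ δ > (0 : ℝ), ∀ x y : ℝ,
      0 < x → x < δ → |y| ≤ C₀ * x ^ M →
      |pderiv2 F 0 2 x y| ≤ C * x ^ (alphaM F M - 2 * M) := by
  have hF : ContDiffAt ℝ (⊤ : ℕ∞) (fun p : ℝ × ℝ => F p.1 p.2) 0 := hsm.contDiffAt hU₀
  obtain ⟨C, hC, hbound⟩ := (pderiv2_zero_left_isBigO_rpow_of_tsupp (C := C₀) hM hF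
    (fun _ => alphaM_le_of_mem_tsupp hM.le) 2).exists_pos
  obtain ⟨δ, hδ, hcusp⟩ := exists_forall_of_eventually_nhdsWithin_cusp hM hbound.bound
  refine ⟨C, hC, δ, hδ, fun x y hx0 hxδ hy => ?_⟩
  simpa [Real.norm_of_nonneg (Real.rpow_nonneg hx0.le _)] using hcusp x y hx0 hxδ hy

end
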